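/- arXiv:0704.2206 — 4 statements merged into one kernel-verified Lean document; each statement's English description precedes it below -/
import Mathlib

section
/- Let P be a set of prime numbers, G' a finite group, G a subgroup of G', and Q₀ a P-permitted subgroup of G. Let C := {x Q₀ x⁻¹ : x ∈ G} and C' := {y Q₀ y⁻¹ : y ∈ G'} be the conjugacy classes of Q₀ under G and G' respectively (as sets of subgroups of G'), and assume |C| · |G'| = |C'| · |G|. Then for every g' ∈ G': if Ppart_P(⟨g'⟩) ∈ C' then the number of elements h ∈ G' with Ppart_P(⟨h g' h⁻¹⟩) ∈ C equals |G|, and if Ppart_P(⟨g'⟩) ∉ C' then this number is 0. (Equivalently, the induced class function Ind_G^{G'} α_C equals α_{C'}.) -/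
/-- An element `x` of finite order is `P`-torsion if every prime factor of its order lies
in the set of primes `P`. -/
def IsPTorsion (P : Set ℕ) {G : Type*} [Group G] (x : G) : Prop :=
  ∀ p : ℕ, p.Prime → p ∣ orderOf x → p ∈ P

/-- The `P`-part of a subgroup `Q`: the subgroup generated by the `P`-torsion elements of
`Q` (for finite cyclic `Q` this is exactly the set of `P`-torsion elements of `Q`). -/
def Ppart (P : Set ℕ) {G : Type*} [Group G] (Q : Subgroup G) : Subgroup G :=
  Subgroup.closure {x : G | x ∈ Q ∧ IsPTorsion P x}

/-- A subgroup `Q` of `G` is `P`-permitted if it is (finite) cyclic and every prime factor of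
its order lies in `P`. -/
def IsPermitted (P : Set ℕ) {G : Type*} [Group G] (Q : Subgroup G) : Prop :=
  IsCyclic Q ∧ ∀ p : ℕ, p.Prime → p ∣ Nat.card Q → p ∈ P

/-- The conjugate subgroup `x H x⁻¹`. -/
def conjSub {G' : Type*} [Group G'] (x : G') (H : Subgroup G') : Subgroup G' :=
  Subgroup.map (MulAut.conj x).toMonoidHom H

/-!
Both `Q ↦ x Q x⁻¹` and `g ↦ x g x⁻¹` are actions of `G'`, and `g ↦ Ppart P ⟨g⟩` is equivariant for
them. So one counts the `h` moving a given point of a finite transitive action into a given subset: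
they form a union of cosets of a point stabilizer, one for each element of the subset, whence the
subset is hit by the same proportion of the group as it occupies in the orbit.
-/

section Action

open MulAction

variable {G α : Type*} [Group G] [MulAction G α] {a b : α} {s : Set α}

theorem card_setOf_smul_mem (hs : s ⊆ orbit G a) :
    Nat.card {g : G | g • a ∈ s} = Nat.card (stabilizer G a) * Nat.card s := by
  have card_cosets : Nat.card (ofQuotientStabilizer G a ⁻¹' s) = Nat.card s := by
    refine Nat.card_preimage_of_injective (injective_ofQuotientStabilizer G a) fun b hb => ?_
    obtain ⟨g, rfl⟩ := hs hb
    exact ⟨g, ofQuotientStabilizer_mk G a g⟩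
  have union_cosets : {g : G | g • a ∈ s} =
      (QuotientGroup.mk : G → G ⧸ stabilizer G a) ⁻¹' (ofQuotientStabilizer G a ⁻¹' s) := rfl
  rw [union_cosets, Nat.card_congr (QuotientGroup.preimageMkEquivSubgroupProdSet _ _),
    Nat.card_prod, card_cosets]

theorem card_setOf_smul_mem_mul_card_orbit (hs : s ⊆ orbit G a) (hb : b ∈ orbit G a) :
    Nat.card {g : G | g • b ∈ s} * Nat.card (orbit G a) = Nat.card s * Nat.card G := by
  rw [← orbit_eq_iff.mpr hb] at hs ⊢
  calc
    _ = Nat.card s * (Nat.card (orbit G b) * Nat.card (stabilizer G b)) := by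
      rw [card_setOf_smul_mem hs]
      ring
    _ = Nat.card s * Nat.card G := by
      rw [← Nat.card_prod, Nat.card_congr (orbitProdStabilizerEquivGroup G b)]

theorem setOf_smul_mem_eq_empty (hs : s ⊆ orbit G a) (hb : b ∉ orbit G a) :
    {g : G | g • b ∈ s} = ∅ :=
  Set.eq_empty_of_forall_notMem fun g hg => hb <| by
    rw [← orbit_eq_iff, ← orbit_eq_iff.mpr (hs hg), orbit_smul]

end Action

section PPart

variable {G H : Type*} [Group G] [Group H] {P : Set ℕ} {f : G →* H}

theorem isPTorsion_map_iff (hf : Function.Injective f) {x : G} :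
    IsPTorsion P (f x) ↔ IsPTorsion P x := by
  rw [IsPTorsion, IsPTorsion, orderOf_injective f hf]

theorem Ppart_map (hf : Function.Injective f) (Q : Subgroup G) :
    Ppart P (Q.map f) = (Ppart P Q).map f := by
  rw [Ppart, Ppart, MonoidHom.map_closure]
  congr 1
  ext y
  constructor
  · rintro ⟨⟨x, hxQ, rfl⟩, hx⟩
    exact ⟨x, ⟨hxQ, (isPTorsion_map_iff hf).mp hx⟩, rfl⟩
  · rintro ⟨x, ⟨hxQ, hx⟩, rfl⟩
    exact ⟨Subgroup.mem_map_of_mem f hxQ, (isPTorsion_map_iff hf).mpr hx⟩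

end PPart

section Conjugation

open MulAction ConjAct
open scoped Pointwise

variable {G : Type*} [Group G]

theorem conjSub_eq_toConjAct_smul (x : G) (Q : Subgroup G) : conjSub x Q = toConjAct x • Q :=
  rfl

theorem setOf_eq_conjSub_eq_orbit (Q : Subgroup G) :
    {H : Subgroup G | ∃ y : G, H = conjSub y Q} = orbit (ConjAct G) Q := by
  ext H
  constructor
  · rintro ⟨y, rfl⟩
    exact mem_orbit Q (toConjAct y)
  · rintro ⟨k, rfl⟩
    exact ⟨ofConjAct k, rfl⟩

theorem Ppart_zpowers_conj (P : Set ℕ) (h g : G) :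
    Ppart P (Subgroup.zpowers (h * g * h⁻¹)) = toConjAct h • Ppart P (Subgroup.zpowers g) := by
  rw [← conjSub_eq_toConjAct_smul, conjSub, ← Ppart_map (MulAut.conj h).injective,
    MonoidHom.map_zpowers]
  rfl

theorem stmt5_general (P : Set ℕ) [Finite G] (Q : Subgroup G) (C C' : Set (Subgroup G))
    (hC : C ⊆ C') (hC' : C' = {H : Subgroup G | ∃ y : G, H = conjSub y Q}) {n : ℕ}
    (hcard : Nat.card C * Nat.card G = Nat.card C' * n) (g : G) :
    (Ppart P (Subgroup.zpowers g) ∈ C' →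
      Nat.card {h : G | Ppart P (Subgroup.zpowers (h * g * h⁻¹)) ∈ C} = n) ∧
    (Ppart P (Subgroup.zpowers g) ∉ C' →
      Nat.card {h : G | Ppart P (Subgroup.zpowers (h * g * h⁻¹)) ∈ C} = 0) := by
  rw [setOf_eq_conjSub_eq_orbit] at hC'
  subst hC'
  set R := Ppart P (Subgroup.zpowers g) with hR
  have card_eq : Nat.card {h : G | Ppart P (Subgroup.zpowers (h * g * h⁻¹)) ∈ C} =
      Nat.card {k : ConjAct G | k • R ∈ C} := by
    simp only [Ppart_zpowers_conj, ← hR]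
    rfl
  rw [card_eq]
  refine ⟨fun hmem => ?_, fun hmem => ?_⟩
  · have : Nonempty (orbit (ConjAct G) Q) := (nonempty_orbit Q).to_subtype
    have orbit_pos : 0 < Nat.card (orbit (ConjAct G) Q) := Nat.card_pos
    refine Nat.eq_of_mul_eq_mul_right orbit_pos ?_
    calc
      _ = Nat.card C * Nat.card (ConjAct G) := card_setOf_smul_mem_mul_card_orbit hC hmem
      _ = Nat.card (orbit (ConjAct G) Q) * n := hcard
      _ = n * Nat.card (orbit (ConjAct G) Q) := Nat.mul_comm _ _
  · rw [setOf_smul_mem_eq_empty hC hmem]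
    exact Nat.card_of_isEmpty

end Conjugation

/- `Ind_G^{G'} α_C = α_{C'}`: with `C`, `C'` the conjugacy classes of a `P`-permitted
subgroup `Q₀ ≤ G` under `G` resp. `G'`, and assuming `|C|·|G'| = |C'|·|G|`, for every
`g' ∈ G'`: if `Ppart ⟨g'⟩ ∈ C'` then `#{h ∈ G' | Ppart ⟨h g' h⁻¹⟩ ∈ C} = |G|`, and if
`Ppart ⟨g'⟩ ∉ C'` then this number is `0`. -/
theorem stmt5 (P : Set ℕ) (hP : ∀ p ∈ P, p.Prime) {G' : Type*} [Group G'] [Finite G']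
    (G : Subgroup G') (Q₀ : Subgroup G') (hQ₀G : Q₀ ≤ G) (hQ₀ : IsPermitted P Q₀)
    (C C' : Set (Subgroup G'))
    (hCdef : C = {H : Subgroup G' | ∃ x ∈ G, H = conjSub x Q₀})
    (hC'def : C' = {H : Subgroup G' | ∃ y : G', H = conjSub y Q₀})
    (hcard : Nat.card C * Nat.card G' = Nat.card C' * Nat.card G) :
    ∀ g' : G',
      (Ppart P (Subgroup.zpowers g') ∈ C' →
        Nat.card {h : G' | Ppart P (Subgroup.zpowers (h * g' * h⁻¹)) ∈ C} = Nat.card G) ∧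
      (Ppart P (Subgroup.zpowers g') ∉ C' →
        Nat.card {h : G' | Ppart P (Subgroup.zpowers (h * g' * h⁻¹)) ∈ C} = 0) :=
  stmt5_general P Q₀ C C' (by rw [hCdef, hC'def]; exact fun _ ⟨x, _, hx⟩ => ⟨x, hx⟩) hC'def hcard
end

section
/- Let P be a set of prime numbers, let H be a finite group with the discrete topology, and let ρ, ρ' : Γ_P → H be continuous group homomorphisms with the same range (image subgroup). Then there is an automorphism α of the common range R with ρ = α ∘ ρ', and consequently for every subgroup S of Γ_P the images coincide: ρ(S) = ρ'(S). -/
instance (p : Nat.Primes) : Fact (p : ℕ).Prime := ⟨p.2⟩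

/-- For a set `P` of primes, `Γ_P = ∏_{p ∈ P} ℤ_p`, the product of the additive groups of
`p`-adic integers over `p ∈ P`, with the product topology. -/
abbrev Gamma (P : Set Nat.Primes) : Type :=
  (p : P) → ℤ_[(p : Nat.Primes)]

/-!
The integer `1` generates `Γ_P` modulo `n Γ_P` for every `n ≠ 0`: by the Chinese remainder theorem
some natural number is close enough to a given `x` at each of the finitely many `p ∈ P` dividing
`n`, and `n` is invertible in the other `ℤ_p`. If `ρ` and `ρ'` have the same range of order `n`,
both factor through the cyclic group `Γ_P / n Γ_P`, on which two homomorphisms with the same range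
are integer multiples of each other. Hence they have the same kernel and the same images of
subgroups.
-/

section CyclicQuotient

variable {A H : Type*} [AddGroup A] [AddGroup H] {f f' : A →+ H}

theorem exists_zsmul_eq_of_isAddCyclic [IsAddCyclic A] (h : f.range ≤ f'.range) :
    ∃ m : ℤ, ∀ x, f x = m • f' x := by
  obtain ⟨g, hg⟩ := exists_zsmul_surjective A
  obtain ⟨z, hz⟩ : f g ∈ f'.range := h ⟨g, rfl⟩
  obtain ⟨m, rfl⟩ := hg z
  refine ⟨m, fun x => ?_⟩
  obtain ⟨k, rfl⟩ := hg x
  calc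
    f (k • g) = k • m • f' g := by rw [map_zsmul, ← hz, map_zsmul]
    _ = m • f' (k • g) := by rw [smul_comm, map_zsmul]

variable {N : AddSubgroup A} [N.Normal] [IsAddCyclic (A ⧸ N)]

theorem exists_zsmul_eq_of_isAddCyclic_quotient (hf : N ≤ f.ker) (hf' : N ≤ f'.ker)
    (h : f.range ≤ f'.range) : ∃ m : ℤ, ∀ x, f x = m • f' x := by
  have hlift : (QuotientAddGroup.lift N f hf).range ≤ (QuotientAddGroup.lift N f' hf').range := by
    rintro _ ⟨x, rfl⟩
    obtain ⟨a, rfl⟩ := QuotientAddGroup.mk_surjective x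
    obtain ⟨b, hb⟩ := h ⟨a, rfl⟩
    exact ⟨b, hb⟩
  obtain ⟨m, hm⟩ := exists_zsmul_eq_of_isAddCyclic hlift
  exact ⟨m, fun x => hm x⟩

theorem ker_le_ker_of_isAddCyclic_quotient (hf : N ≤ f.ker) (hf' : N ≤ f'.ker)
    (h : f.range ≤ f'.range) : f'.ker ≤ f.ker := by
  obtain ⟨m, hm⟩ := exists_zsmul_eq_of_isAddCyclic_quotient hf hf' h
  intro x hx
  rw [AddMonoidHom.mem_ker] at hx ⊢
  rw [hm, hx, smul_zero]

theorem map_le_map_of_isAddCyclic_quotient (hf : N ≤ f.ker) (hf' : N ≤ f'.ker)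
    (h : f.range ≤ f'.range) (S : AddSubgroup A) : S.map f ≤ S.map f' := by
  obtain ⟨m, hm⟩ := exists_zsmul_eq_of_isAddCyclic_quotient hf hf' h
  rintro _ ⟨x, hx, rfl⟩
  exact ⟨m • x, S.zsmul_mem hx m, by rw [map_zsmul, hm]⟩

end CyclicQuotient

theorem exists_addEquiv_range_of_ker_eq {A B C : Type*} [AddGroup A] [AddGroup B] [AddGroup C]
    {f : A →+ B} {g : A →+ C} (h : f.ker = g.ker) :
    ∃ e : f.range ≃+ g.range, ∀ x, e (f.rangeRestrict x) = g.rangeRestrict x := by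
  let e := ((QuotientAddGroup.quotientKerEquivRange f).symm.trans
    (QuotientAddGroup.quotientAddEquivOfEq h)).trans (QuotientAddGroup.quotientKerEquivRange g)
  refine ⟨e, fun x => ?_⟩
  have hx : (QuotientAddGroup.quotientKerEquivRange f).symm (f.rangeRestrict x) = (x : A ⧸ f.ker) :=
    (AddEquiv.symm_apply_eq _).mpr rfl
  simp only [e, AddEquiv.trans_apply, hx, QuotientAddGroup.quotientAddEquivOfEq_mk]
  rfl

theorem range_nsmulAddMonoidHom_card_range_le_ker {A H : Type*} [AddCommGroup A] [AddGroup H]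
    (f : A →+ H) :
    (nsmulAddMonoidHom (α := A) (Nat.card f.range)).range ≤ f.ker := by
  rintro _ ⟨x, rfl⟩
  have hx : Nat.card f.range • f.rangeRestrict x = 0 := card_nsmul_eq_zero'
  simpa [AddMonoidHom.mem_ker] using congrArg Subtype.val hx

theorem associated_pow_factorization_natCast (p : ℕ) [hp : Fact p.Prime] {n : ℕ} (hn : n ≠ 0) :
    Associated ((p : ℤ_[p]) ^ n.factorization p) n := by
  have hunit : IsUnit ((n / p ^ n.factorization p : ℕ) : ℤ_[p]) := by
    rw [PadicInt.isUnit_iff, PadicInt.norm_natCast_eq_one_iff]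
    exact Nat.coprime_ordCompl hp.out hn
  refine ⟨hunit.unit, ?_⟩
  rw [IsUnit.unit_spec, ← Nat.cast_pow, ← Nat.cast_mul, Nat.ordProj_mul_ordCompl_eq_self]

theorem natCast_dvd_sub_natCast_of_modEq_appr {p : ℕ} [Fact p.Prime] {n : ℕ} (hn : n ≠ 0)
    {x : ℤ_[p]} {k : ℕ}
    (hk : k ≡ x.appr (n.factorization p) [MOD p ^ n.factorization p]) :
    (n : ℤ_[p]) ∣ x - k := by
  rw [← (associated_pow_factorization_natCast p hn).dvd_iff_dvd_left]
  have happr : (p : ℤ_[p]) ^ n.factorization p ∣ x - x.appr (n.factorization p) :=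
    Ideal.mem_span_singleton.mp (PadicInt.appr_spec _ x)
  have hmod : (p : ℤ_[p]) ^ n.factorization p ∣ x.appr (n.factorization p) - k := by
    exact_mod_cast map_dvd (Int.castRingHom ℤ_[p]) (Nat.modEq_iff_dvd.mp hk)
  simpa only [sub_add_sub_cancel] using dvd_add happr hmod

theorem exists_modEq_pow_factorization {ι : Type*} {p : ι → ℕ} (hp : ∀ i, (p i).Prime)
    (hinj : Function.Injective p) (n : ℕ) (a : ι → ℕ) :
    ∃ k, ∀ i, k ≡ a i [MOD p i ^ n.factorization (p i)] := by
  have hfin : (p ⁻¹' n.primeFactors).Finite :=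
    n.primeFactors.finite_toSet.preimage hinj.injOn
  have hcoprime : Pairwise (Function.onFun Nat.Coprime fun i => p i ^ n.factorization (p i)) :=
    fun i j hij => Nat.Coprime.pow _ _ <|
      (Nat.coprime_primes (hp i) (hp j)).mpr (hinj.ne hij)
  obtain ⟨k, hk⟩ := Nat.chineseRemainderOfFinset a (fun i => p i ^ n.factorization (p i))
    hfin.toFinset (fun i _ => pow_ne_zero _ (hp i).ne_zero) (hcoprime.set_pairwise _)
  refine ⟨k, fun i => ?_⟩
  by_cases hi : p i ∈ n.primeFactors
  · exact hk i (hfin.mem_toFinset.mpr hi)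
  · rw [← Nat.support_factorization, Finsupp.notMem_support_iff] at hi
    rw [hi, pow_zero]
    exact Nat.modEq_one

theorem exists_natCast_dvd_sub_natCast {P : Set Nat.Primes} {n : ℕ} (hn : n ≠ 0) (x : Gamma P) :
    ∃ k : ℕ, (n : Gamma P) ∣ x - k := by
  obtain ⟨k, hk⟩ := exists_modEq_pow_factorization (p := fun p : P => ((p : Nat.Primes) : ℕ))
    (fun p => p.1.2) (Subtype.val_injective.comp Subtype.val_injective) n
    (fun p => (x p).appr (n.factorization p))
  exact ⟨k, pi_dvd_iff.mpr fun p => natCast_dvd_sub_natCast_of_modEq_appr hn (hk p)⟩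

theorem isAddCyclic_gamma_quotient_range_nsmulAddMonoidHom (P : Set Nat.Primes) {n : ℕ}
    (hn : n ≠ 0) :
    IsAddCyclic (Gamma P ⧸ (nsmulAddMonoidHom (α := Gamma P) n).range) := by
  refine ⟨⟨((1 : Gamma P) : Gamma P ⧸ _), fun x => ?_⟩⟩
  obtain ⟨x, rfl⟩ := QuotientAddGroup.mk_surjective x
  obtain ⟨k, y, hy⟩ := exists_natCast_dvd_sub_natCast hn x
  refine ⟨k, QuotientAddGroup.eq.mpr ⟨y, ?_⟩⟩
  simp only [nsmulAddMonoidHom_apply, nsmul_eq_mul, ← hy, natCast_zsmul, mul_one]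
  abel

theorem stmt13_general {A H : Type*} [AddCommGroup A] [AddGroup H]
    (hA : ∀ n : ℕ, n ≠ 0 → IsAddCyclic (A ⧸ (nsmulAddMonoidHom (α := A) n).range))
    (ρ ρ' : A →+ H) [Finite ρ'.range] (hr : ρ.range = ρ'.range) :
    (∃ α : ρ'.range ≃+ ρ'.range, ∀ x : A, ρ x = α (ρ'.rangeRestrict x)) ∧
    ∀ S : AddSubgroup A, S.map ρ = S.map ρ' := by
  have := hA (Nat.card ρ'.range) Nat.card_pos.ne'
  have hρ' := range_nsmulAddMonoidHom_card_range_le_ker ρ'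
  have hρ : (nsmulAddMonoidHom (Nat.card ρ'.range)).range ≤ ρ.ker :=
    hr ▸ range_nsmulAddMonoidHom_card_range_le_ker ρ
  constructor
  · have hker : ρ'.ker = ρ.ker :=
      le_antisymm (ker_le_ker_of_isAddCyclic_quotient hρ hρ' hr.le)
        (ker_le_ker_of_isAddCyclic_quotient hρ' hρ hr.ge)
    obtain ⟨e, he⟩ := exists_addEquiv_range_of_ker_eq hker
    exact ⟨e.trans (AddEquiv.addSubgroupCongr hr), fun x => congrArg Subtype.val (he x).symm⟩
  · exact fun S => le_antisymm (map_le_map_of_isAddCyclic_quotient hρ hρ' hr.le S)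
      (map_le_map_of_isAddCyclic_quotient hρ' hρ hr.ge S)

/-- If two continuous homomorphisms `ρ, ρ' : Γ_P → H` into a finite discrete group have the
same range `R`, then `ρ = α ∘ ρ'` for some automorphism `α` of `R`, and consequently
`ρ(S) = ρ'(S)` for every subgroup `S` of `Γ_P`. -/
theorem stmt13 (P : Set Nat.Primes) {H : Type*} [AddGroup H] [Finite H]
    [TopologicalSpace H] [DiscreteTopology H]
    (ρ ρ' : Gamma P →+ H) (hρ : Continuous ρ) (hρ' : Continuous ρ')
    (hr : ρ.range = ρ'.range) :
    (∃ α : ρ'.range ≃+ ρ'.range,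
      ∀ x : Gamma P,
        ρ x = (α ⟨ρ' x, AddMonoidHom.mem_range.mpr ⟨x, rfl⟩⟩ : ρ'.range)) ∧
    ∀ S : AddSubgroup (Gamma P), S.map ρ = S.map ρ' :=
  stmt13_general (fun _ => isAddCyclic_gamma_quotient_range_nsmulAddMonoidHom P) ρ ρ' hr
end

section
/- Let P₂ ⊆ P₁ be sets of prime numbers, let Γ := Γ_{P₁} = ∏_{p∈P₁} ℤ_p, and let Γ₂ := {x ∈ Γ : x_p = 0 for all p ∈ P₁ \ P₂} be the direct factor of Γ corresponding to P₂. Let H be a finite group with the discrete topology and ρ : Γ → H a continuous group homomorphism with range R. Then ρ(Γ₂) = Ppart_{P₂}(R), the P₂-part of the range, i.e. ρ(Γ₂) = {y ∈ R : every prime factor of the order of y lies in P₂}. -/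
/-!
Split `x = x₁ + x₂` along `P₂` and its complement. A prime `q ∉ P₂` acts invertibly on `ℤ_p` for
`p ∈ P₂`, so `x₁` is divisible by every power of `q`; as the range has bounded exponent, `q` cannot
divide the order of `ρ x₁`. In the same way only primes outside `P₂` divide the order of `ρ x₂`.
These orders are therefore coprime and multiply to the order of `ρ x`; if the latter involves only
primes of `P₂`, then `ρ x₂ = 0` and `ρ x = ρ x₁`.
-/

section Torsion

variable {H : Type*} [AddMonoid H] {P : Set Nat.Primes} {u v y : H}

/-- `y` is `P`-torsion: every prime factor of its order lies in `P`. Elements of infinite order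
have `addOrderOf y = 0`, so they satisfy this exactly when `P` contains all primes. -/
def IsPrimeSetTorsion (P : Set Nat.Primes) (y : H) : Prop :=
  ∀ q : Nat.Primes, (q : ℕ) ∣ addOrderOf y → q ∈ P

theorem IsPrimeSetTorsion.coprime_addOrderOf (hu : IsPrimeSetTorsion P u)
    (hv : IsPrimeSetTorsion Pᶜ v) : (addOrderOf u).Coprime (addOrderOf v) :=
  Nat.coprime_of_dvd fun q hq hqu hqv ↦ hv ⟨q, hq⟩ hqv (hu ⟨q, hq⟩ hqu)

theorem IsPrimeSetTorsion.eq_zero_of_compl (hy : IsPrimeSetTorsion P y)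
    (hy' : IsPrimeSetTorsion Pᶜ y) : y = 0 :=
  AddMonoid.addOrderOf_eq_one_iff.mp <|
    (Nat.coprime_self _).mp (hy.coprime_addOrderOf hy')

theorem IsPrimeSetTorsion.eq_zero_of_add (huv : IsPrimeSetTorsion P (u + v))
    (hcomm : AddCommute u v) (hu : IsPrimeSetTorsion P u) (hv : IsPrimeSetTorsion Pᶜ v) :
    v = 0 := by
  have order_add : addOrderOf (u + v) = addOrderOf u * addOrderOf v :=
    hcomm.addOrderOf_add_eq_mul_addOrderOf_of_coprime (hu.coprime_addOrderOf hv)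
  have hvP : IsPrimeSetTorsion P v := fun q hq ↦
    huv q (order_add ▸ hq.mul_left (addOrderOf u))
  exact hvP.eq_zero_of_compl hv

theorem not_dvd_addOrderOf_of_forall_exists_pow_nsmul_eq {q n : ℕ} (hq : q ≠ 1) (hn : n ≠ 0)
    (hy : ∀ k : ℕ, ∃ z : H, n • z = 0 ∧ q ^ k • z = y) : ¬ q ∣ addOrderOf y := by
  obtain ⟨k, m, hqm, rfl⟩ := Nat.exists_eq_pow_mul_and_not_dvd hn q hq
  obtain ⟨z, hz, rfl⟩ := hy k
  have order_dvd : addOrderOf (q ^ k • z) ∣ m :=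
    addOrderOf_dvd_of_nsmul_eq_zero (by rw [← mul_nsmul, hz])
  exact fun h ↦ hqm (h.trans order_dvd)

end Torsion

section DirectFactor

variable {ι : Type*} (p : ι → Nat.Primes) (M : ι → Type*) [∀ i, AddCommMonoid (M i)]

/-- The direct factor `∏_{p i ∈ P} M i` of `∏ i, M i`, as the submonoid of the families vanishing
at every `i` with `p i ∉ P`. For `Gamma P₁` with `p` the inclusion of `P₁` and
`P = P₂`, this is `Γ₂`. -/
def directFactor (P : Set Nat.Primes) : AddSubmonoid (∀ i, M i) where
  carrier := {x | ∀ i, p i ∉ P → x i = 0}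
  zero_mem' _ _ := rfl
  add_mem' hx hy i hi := by rw [Pi.add_apply, hx i hi, hy i hi, add_zero]

theorem directFactor_sup_compl (P : Set Nat.Primes) :
    directFactor p M P ⊔ directFactor p M Pᶜ = ⊤ := by
  classical
  refine eq_top_iff.mpr fun x _ ↦ AddSubmonoid.mem_sup.mpr
    ⟨fun i ↦ if p i ∈ P then x i else 0, fun i hi ↦ if_neg hi,
      fun i ↦ if p i ∈ P then 0 else x i, fun i hi ↦ if_pos (not_not.mp hi), ?_⟩
  ext i
  by_cases hi : p i ∈ P <;> simp [hi]

variable {p M} {P : Set Nat.Primes} {x : ∀ i, M i}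

theorem exists_pow_nsmul_eq_of_mem_directFactor {q : Nat.Primes}
    (hM : ∀ i, q ≠ p i → Function.Surjective fun m : M i ↦ (q : ℕ) • m)
    (hq : q ∉ P) (hx : x ∈ directFactor p M P) (k : ℕ) :
    ∃ z : ∀ i, M i, (q : ℕ) ^ k • z = x := by
  have exists_coord (i : ι) : ∃ z : M i, (q : ℕ) ^ k • z = x i := by
    by_cases hi : p i ∈ P
    · have surj := (hM i (ne_of_mem_of_not_mem hi hq).symm).iterate k
      rw [smul_iterate] at surj
      exact surj (x i)
    · exact ⟨0, by rw [smul_zero, hx i hi]⟩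
  choose z hz using exists_coord
  exact ⟨z, funext hz⟩

variable {H : Type*} [AddMonoid H] {ρ : (∀ i, M i) →+ H} {n : ℕ}

theorem isPrimeSetTorsion_map_of_mem_directFactor
    (hM : ∀ i (q : Nat.Primes), q ≠ p i → Function.Surjective fun m : M i ↦ (q : ℕ) • m)
    (hn : n ≠ 0) (hρ : ∀ x, n • ρ x = 0) (hx : x ∈ directFactor p M P) :
    IsPrimeSetTorsion P (ρ x) := by
  intro q hdvd
  by_contra hq
  refine not_dvd_addOrderOf_of_forall_exists_pow_nsmul_eq q.2.ne_one hn (fun k ↦ ?_) hdvd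
  obtain ⟨z, rfl⟩ := exists_pow_nsmul_eq_of_mem_directFactor (hM · q) hq hx k
  exact ⟨ρ z, hρ z, (map_nsmul ρ _ z).symm⟩

theorem stmt14_general
    (hM : ∀ i (q : Nat.Primes), q ≠ p i → Function.Surjective fun m : M i ↦ (q : ℕ) • m)
    (hn : n ≠ 0) (hρ : ∀ x, n • ρ x = 0) (P : Set Nat.Primes) :
    ρ '' directFactor p M P = {y | y ∈ Set.range ρ ∧ IsPrimeSetTorsion P y} := by
  have torsion {Q : Set Nat.Primes} {x : ∀ i, M i} (hx : x ∈ directFactor p M Q) :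
      IsPrimeSetTorsion Q (ρ x) := isPrimeSetTorsion_map_of_mem_directFactor hM hn hρ hx
  refine Set.Subset.antisymm ?_ ?_
  · rintro _ ⟨x, hx, rfl⟩
    exact ⟨⟨x, rfl⟩, torsion hx⟩
  · rintro _ ⟨⟨x, rfl⟩, hy⟩
    obtain ⟨x₁, hx₁, x₂, hx₂, rfl⟩ := AddSubmonoid.mem_sup.mp <|
      (directFactor_sup_compl p M P).ge (AddSubmonoid.mem_top x)
    rw [map_add] at hy
    have map_x₂ : ρ x₂ = 0 :=
      hy.eq_zero_of_add ((AddCommute.all x₁ x₂).map ρ) (torsion hx₁) (torsion hx₂)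
    exact ⟨x₁, hx₁, by rw [map_add, map_x₂, add_zero]⟩

end DirectFactor

theorem padicInt_nsmul_surjective_of_coprime {p n : ℕ} [Fact p.Prime] (hn : p.Coprime n)
    (M : Type*) [AddCommMonoid M] [Module ℤ_[p] M] :
    Function.Surjective fun m : M ↦ n • m := by
  have isUnit_n : IsUnit (n : ℤ_[p]) :=
    PadicInt.isUnit_iff.mpr (PadicInt.norm_natCast_eq_one_iff.mpr hn)
  simpa only [Nat.cast_smul_eq_nsmul] using
    (IsUnit.smul_bijective isUnit_n : Function.Bijective fun m : M ↦ (n : ℤ_[p]) • m).surjective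

/-- For `P₂ ⊆ P₁`, the direct factor `Γ₂ = {x ∈ Γ_{P₁} : x_p = 0 for p ∈ P₁ \ P₂}` and a
continuous homomorphism `ρ : Γ_{P₁} → H` into a finite discrete group with range `R`, one
has `ρ(Γ₂) = Ppart_{P₂}(R) = {y ∈ R : every prime factor of the order of y lies in P₂}`. -/
theorem stmt14 (P₁ P₂ : Set Nat.Primes) (hP : P₂ ⊆ P₁) {H : Type*} [AddGroup H] [Finite H]
    [TopologicalSpace H] [DiscreteTopology H]
    (ρ : Gamma P₁ →+ H) (hρ : Continuous ρ) :
    ⇑ρ '' {x : Gamma P₁ | ∀ p : P₁, (p : Nat.Primes) ∉ P₂ → x p = 0}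
      = {y : H | y ∈ Set.range ρ ∧ ∀ q : Nat.Primes, (q : ℕ) ∣ addOrderOf y → q ∈ P₂} :=
  stmt14_general (p := fun p : P₁ ↦ (p : Nat.Primes))
    (fun p q hq ↦ padicInt_nsmul_surjective_of_coprime ((Nat.coprime_primes p.1.2 q.2).mpr
      (Nat.Primes.coe_nat_injective.ne hq.symm)) _)
    Nat.card_pos.ne' (fun _ ↦ card_nsmul_eq_zero') P₂
end

section
/- Let P be a set of prime numbers, let Γ := Γ_P = ∏_{p∈P} ℤ_p, let Γ₂ be a subgroup of Γ, let G be a finite group with the discrete topology, and let C₂ be any set of subgroups of G. Define C₁ := {range(ρ') : ρ' is a continuous group homomorphism Γ → G with ρ'(Γ₂) ∈ C₂}. Then for every continuous group homomorphism ρ : Γ → G one has: range(ρ) ∈ C₁ if and only if ρ(Γ₂) ∈ C₂. -/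
/-!
Every finite quotient of `Γ_P` is cyclic, because modulo `N ≠ 0` each element of `Γ_P` is congruent
to a natural number. If `ρ` and `ρ'` have the same finite range, both factor through the cyclic
group `Γ_P / (ker ρ ∩ ker ρ')`, where each is the other one precomposed with multiplication by an
integer. Every subgroup is stable under such a multiplication, so `ρ(Γ₂) = ρ'(Γ₂)`.
-/

section CyclicQuotients

variable {A G : Type*} [AddGroup A] [AddGroup G]

theorem exists_zsmul_of_range_le [IsAddCyclic A] {ρ ρ' : A →+ G} (h : ρ.range ≤ ρ'.range) :
    ∃ k : ℤ, ∀ x, ρ x = ρ' (k • x) := by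
  obtain ⟨a, ha⟩ := IsAddCyclic.exists_generator (α := A)
  obtain ⟨z, hz⟩ := h ⟨a, rfl⟩
  obtain ⟨k, rfl⟩ := AddSubgroup.mem_zmultiples_iff.1 (ha z)
  refine ⟨k, fun x => ?_⟩
  obtain ⟨m, rfl⟩ := AddSubgroup.mem_zmultiples_iff.1 (ha x)
  rw [map_zsmul, ← hz, ← map_zsmul, zsmul_comm]

theorem map_le_map_of_range_le [IsAddCyclic A] (B : AddSubgroup A) {ρ ρ' : A →+ G}
    (h : ρ.range ≤ ρ'.range) : B.map ρ ≤ B.map ρ' := by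
  obtain ⟨k, hk⟩ := exists_zsmul_of_range_le h
  rintro _ ⟨x, hx, rfl⟩
  exact ⟨k • x, B.zsmul_mem hx k, (hk x).symm⟩

theorem range_quotientAddGroup_lift (K : AddSubgroup A) [K.Normal] {ρ : A →+ G} (hK : K ≤ ρ.ker) :
    (QuotientAddGroup.lift K ρ hK).range = ρ.range :=
  SetLike.coe_injective <|
    (QuotientAddGroup.mk_surjective.range_comp (QuotientAddGroup.lift K ρ hK)).symm

/-- All finite quotients of `A` are cyclic; equivalently, the profinite completion of `A` is
procyclic. No topology on `A` is involved: `K` need not be open. -/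
def HasCyclicFiniteQuotients (A : Type*) [AddGroup A] : Prop :=
  ∀ (K : AddSubgroup A) [K.Normal] [K.FiniteIndex], IsAddCyclic (A ⧸ K)

theorem HasCyclicFiniteQuotients.map_eq_map_of_range_eq (hA : HasCyclicFiniteQuotients A)
    (B : AddSubgroup A) {ρ ρ' : A →+ G} [Finite ρ.range] (h : ρ.range = ρ'.range) :
    B.map ρ = B.map ρ' := by
  have : Finite ρ'.range := h ▸ ‹Finite ρ.range›
  let K := ρ.ker ⊓ ρ'.ker
  have : IsAddCyclic (A ⧸ K) := hA K
  let σ := QuotientAddGroup.lift K ρ inf_le_left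
  let σ' := QuotientAddGroup.lift K ρ' inf_le_right
  have hσ : σ.range = σ'.range := by
    rw [range_quotientAddGroup_lift, range_quotientAddGroup_lift, h]
  let π := QuotientAddGroup.mk' K
  calc B.map ρ = (B.map π).map σ := (B.map_map σ π).symm
    _ = (B.map π).map σ' :=
      (map_le_map_of_range_le _ hσ.le).antisymm (map_le_map_of_range_le _ hσ.ge)
    _ = B.map ρ' := B.map_map σ' π

end CyclicQuotients

section NatCastApproximation

variable {R : Type*} [CommRing R]

theorem exists_natCast_dvd_sub_natCast_of_prime
    (hR : ∀ q : ℕ, q.Prime → ∀ x : R, ∃ n : ℕ, (q : R) ∣ x - n) {N : ℕ} (hN : N ≠ 0) (x : R) :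
    ∃ n : ℕ, (N : R) ∣ x - n := by
  induction N using Nat.recOnMul generalizing x with
  | zero => exact absurd rfl hN
  | one => exact ⟨0, by simp⟩
  | prime q hq => exact hR q hq x
  | mul a b iha ihb =>
    obtain ⟨n, y, hy⟩ := iha (left_ne_zero_of_mul hN) x
    obtain ⟨m, z, hz⟩ := ihb (right_ne_zero_of_mul hN) y
    refine ⟨n + a * m, z, ?_⟩
    push_cast
    linear_combination hy + (a : R) * hz

theorem hasCyclicFiniteQuotients_of_exists_natCast_dvd_sub
    (hR : ∀ N : ℕ, N ≠ 0 → ∀ x : R, ∃ n : ℕ, (N : R) ∣ x - n) : HasCyclicFiniteQuotients R := by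
  intro K _ _
  refine ⟨(1 : R), fun q => ?_⟩
  induction q using QuotientAddGroup.induction_on with
  | H x =>
    obtain ⟨n, y, hy⟩ := hR K.index AddSubgroup.FiniteIndex.index_ne_zero x
    have hK : x - n ∈ K := by
      rw [hy, ← nsmul_eq_mul]
      exact K.nsmul_index_mem y
    refine AddSubgroup.mem_zmultiples_iff.2 ⟨n, ?_⟩
    rw [← QuotientAddGroup.mk_zsmul, QuotientAddGroup.eq_iff_sub_mem]
    simpa using K.neg_mem hK

end NatCastApproximation

theorem isUnit_natCast_padicInt_iff {p n : ℕ} [Fact p.Prime] :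
    IsUnit (n : ℤ_[p]) ↔ p.Coprime n :=
  PadicInt.isUnit_iff.trans PadicInt.norm_natCast_eq_one_iff

theorem exists_prime_dvd_sub_natCast_padicInt {p : ℕ} [Fact p.Prime] (x : ℤ_[p]) :
    ∃ n : ℕ, (p : ℤ_[p]) ∣ x - n := by
  obtain ⟨n, -, hn⟩ := PadicInt.exists_mem_range x
  rw [PadicInt.maximalIdeal_eq_span_p, Ideal.mem_span_singleton] at hn
  exact ⟨n, hn⟩

theorem exists_prime_dvd_sub_natCast_gamma (P : Set Nat.Primes) {q : ℕ} (hq : q.Prime)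
    (x : Gamma P) : ∃ n : ℕ, (q : Gamma P) ∣ x - n := by
  have dvd_of_ne (r : P) (y : ℤ_[(r : Nat.Primes)]) (hr : ((r : Nat.Primes) : ℕ) ≠ q) :
      (q : ℤ_[(r : Nat.Primes)]) ∣ y :=
    (isUnit_natCast_padicInt_iff.2 ((Nat.coprime_primes r.1.2 hq).2 hr)).dvd
  by_cases hqP : ∃ p : P, ((p : Nat.Primes) : ℕ) = q
  · obtain ⟨p, rfl⟩ := hqP
    obtain ⟨n, hn⟩ := exists_prime_dvd_sub_natCast_padicInt (x p)
    refine ⟨n, pi_dvd_iff.2 fun r => ?_⟩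
    obtain rfl | hr := eq_or_ne r p
    · exact hn
    · exact dvd_of_ne r _ fun h => hr (Subtype.ext (Subtype.ext h))
  · push Not at hqP
    exact ⟨0, pi_dvd_iff.2 fun r => dvd_of_ne r _ (hqP r)⟩

theorem hasCyclicFiniteQuotients_gamma (P : Set Nat.Primes) : HasCyclicFiniteQuotients (Gamma P) :=
  hasCyclicFiniteQuotients_of_exists_natCast_dvd_sub fun _ =>
    exists_natCast_dvd_sub_natCast_of_prime fun _ => exists_prime_dvd_sub_natCast_gamma P

theorem stmt16_general {A G : Type*} [AddGroup A] [AddGroup G] (hA : HasCyclicFiniteQuotients A)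
    (B : AddSubgroup A) (H : Set (A →+ G)) (C₂ : Set (AddSubgroup G)) (C₁ : Set (AddSubgroup G))
    (hC₁ : C₁ = {R : AddSubgroup G | ∃ ρ' ∈ H, ρ'.range = R ∧ B.map ρ' ∈ C₂}) :
    ∀ ρ ∈ H, Finite ρ.range → (ρ.range ∈ C₁ ↔ B.map ρ ∈ C₂) := by
  intro ρ hρ _
  rw [hC₁]
  constructor
  · rintro ⟨ρ', -, hrange, hmap⟩
    rwa [hA.map_eq_map_of_range_eq B hrange.symm]
  · exact fun hmap => ⟨ρ, hρ, rfl, hmap⟩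

/-- Let `Γ₂` be a subgroup of `Γ := Γ_P`, `G` a finite discrete group, `C₂` a set of
subgroups of `G`, and `C₁ := {range ρ' : ρ' : Γ → G continuous with ρ'(Γ₂) ∈ C₂}`. Then for
every continuous homomorphism `ρ : Γ → G`: `range ρ ∈ C₁ ↔ ρ(Γ₂) ∈ C₂`. -/
theorem stmt16 (P : Set Nat.Primes) (Γ₂ : AddSubgroup (Gamma P)) {G : Type*} [AddGroup G]
    [Finite G] [TopologicalSpace G] [DiscreteTopology G]
    (C₂ : Set (AddSubgroup G)) (C₁ : Set (AddSubgroup G))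
    (hC₁ : C₁ = {R : AddSubgroup G |
      ∃ ρ' : Gamma P →+ G, Continuous ρ' ∧ ρ'.range = R ∧ Γ₂.map ρ' ∈ C₂}) :
    ∀ ρ : Gamma P →+ G, Continuous ρ → (ρ.range ∈ C₁ ↔ Γ₂.map ρ ∈ C₂) := fun ρ hρ =>
  stmt16_general (hasCyclicFiniteQuotients_gamma P) Γ₂ {ρ | Continuous ρ} C₂ C₁ hC₁ ρ hρ
    inferInstance
end
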